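/- Let w = (w_n)_{n∈ℤ} be a sequence of positive reals bounded above and bounded below away from 0. Then the bilateral weighted shift B_w is frequently hypercyclic on ℓ^p(ℤ) if and only if its inverse B_w^{-1} is frequently hypercyclic on ℓ^p(ℤ). -/

import Mathlib

open Filter Topology
open scoped Classical ENNReal

noncomputable def upperDensity (A : Set ℕ) : ℝ :=
  limsup (fun n : ℕ => (((Finset.range (n+1)).filter (· ∈ A)).card : ℝ) / (n+1)) atTop

noncomputable def lowerDensity (A : Set ℕ) : ℝ :=
  liminf (fun n : ℕ => (((Finset.range (n+1)).filter (· ∈ A)).card : ℝ) / (n+1)) atTop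

noncomputable def upperDensityZ (A : Set ℤ) : ℝ :=
  limsup (fun n : ℕ => (((Finset.Icc (-(n:ℤ)) (n:ℤ)).filter (· ∈ A)).card : ℝ) / (2*n+1)) atTop

def freqHCVec {X : Type*} [NormedAddCommGroup X] [NormedSpace ℝ X]
    (T : X →L[ℝ] X) (x : X) : Prop :=
  ∀ U : Set X, IsOpen U → U.Nonempty → 0 < lowerDensity {n : ℕ | (T ^ n) x ∈ U}

def uFreqHCVec {X : Type*} [NormedAddCommGroup X] [NormedSpace ℝ X]
    (T : X →L[ℝ] X) (x : X) : Prop :=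
  ∀ U : Set X, IsOpen U → U.Nonempty → 0 < upperDensity {n : ℕ | (T ^ n) x ∈ U}

/-!
In the coordinates `W k • x k`, where `W` is the cumulative product of the weights, `B_w` is the
backward shift and its inverse the forward one. Such a shift, along either order of the indices, is
frequently hypercyclic if and only if `∑ ‖W k‖⁻¹ ^ p` converges, and this condition does not see the
order.

Sufficiency: summability gives every finitely supported vector a bilateral orbit with summable
terms. Superposing countably many such orbits, delayed along sets of times that have positive lower
density and are separated by prescribed gaps, produces a frequently hypercyclic vector. The gaps
are distributed like the `2`-adic valuation, whose average is bounded.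

Necessity (after Bayart and Ruzsa): put `u k = ‖W k‖⁻¹ ^ p`, and let `A` be the set of times at
which the orbit is near a vector supported at `0`. Since `‖(T ^ n) x‖` is bounded for `n ∈ A`, so
are the sums `∑ u (m - n)` over `m ∈ A`. Double counting makes `u` summable over the differences
`m - n` that occur with positive frequency. By Cauchy–Schwarz in the form of additive energy, a set
with no two points differing by such a popular difference has bounded size; hence popular
differences have bounded gaps, which are filled because `u k / u (k + 1)` is bounded.
-/

section Density

/-- The elements of `A` in `{0, …, N}`, whose number the densities of `A` compare with `N + 1`. -/
noncomputable def truncation (A : Set ℕ) (N : ℕ) : Finset ℕ :=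
  (Finset.range (N + 1)).filter (· ∈ A)

@[simp]
theorem mem_truncation {A : Set ℕ} {N n : ℕ} : n ∈ truncation A N ↔ n ≤ N ∧ n ∈ A := by
  simp [truncation]

theorem card_truncation_le (A : Set ℕ) (N : ℕ) : ((truncation A N).card : ℝ) ≤ N + 1 := by
  exact_mod_cast (Finset.card_filter_le _ _).trans_eq (Finset.card_range _)

theorem truncation_ratio_nonneg (A : Set ℕ) (N : ℕ) :
    0 ≤ ((truncation A N).card : ℝ) / (N + 1) := by
  positivity

theorem truncation_ratio_le_one (A : Set ℕ) (N : ℕ) :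
    ((truncation A N).card : ℝ) / (N + 1) ≤ 1 :=
  div_le_one_of_le₀ (card_truncation_le A N) (by positivity)

theorem lowerDensity_le_upperDensity (A : Set ℕ) : lowerDensity A ≤ upperDensity A :=
  liminf_le_limsup (isBoundedUnder_of ⟨1, truncation_ratio_le_one A⟩)
    (isBoundedUnder_of ⟨0, truncation_ratio_nonneg A⟩)

theorem lowerDensity_pos_iff {A : Set ℕ} :
    0 < lowerDensity A ↔
      ∃ d > 0, ∀ᶠ N : ℕ in atTop, d * (N + 1) ≤ ((truncation A N).card : ℝ) := by
  constructor
  · intro h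
    obtain ⟨d, hd, hdA⟩ := exists_between h
    refine ⟨d, hd, (eventually_lt_of_lt_liminf hdA
      (isBoundedUnder_of ⟨0, truncation_ratio_nonneg A⟩)).mono fun N hN => ?_⟩
    exact ((lt_div_iff₀ (by positivity)).1 hN).le
  · rintro ⟨d, hd, h⟩
    refine hd.trans_le (le_liminf_of_le
      (isBoundedUnder_of ⟨1, truncation_ratio_le_one A⟩).isCoboundedUnder_ge
      (h.mono fun N hN => ?_))
    exact (le_div_iff₀ (by positivity)).2 hN

theorem exists_frequently_le_card_truncation {A : Set ℕ} (hA : 0 < upperDensity A) :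
    ∃ d > 0, ∃ᶠ N : ℕ in atTop, d * (N + 1) ≤ ((truncation A N).card : ℝ) := by
  obtain ⟨d, hd, hdA⟩ := exists_between hA
  refine ⟨d, hd, (frequently_lt_of_lt_limsup
    (isBoundedUnder_of ⟨0, truncation_ratio_nonneg A⟩).isCoboundedUnder_le hdA).mono fun N hN => ?_⟩
  exact ((lt_div_iff₀ (by positivity)).1 hN).le

theorem lowerDensity_pos_mono {A B : Set ℕ} (hAB : A ⊆ B) (hA : 0 < lowerDensity A) :
    0 < lowerDensity B := by
  obtain ⟨d, hd, h⟩ := lowerDensity_pos_iff.1 hA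
  refine lowerDensity_pos_iff.2 ⟨d, hd, h.mono fun N hN => hN.trans ?_⟩
  exact_mod_cast Finset.card_le_card (Finset.monotone_filter_right _ fun _ _ h => hAB h)

theorem lowerDensity_univ_pos : 0 < lowerDensity Set.univ :=
  lowerDensity_pos_iff.2 ⟨1, one_pos, .of_forall fun N => by simp [truncation]⟩

theorem lowerDensity_image_pos {n : ℕ → ℕ} (hn : Function.Injective n) {C : ℕ}
    (hC : ∀ j, n j < C * (j + 1)) {J : Set ℕ} (hJ : 0 < lowerDensity J) :
    0 < lowerDensity (n '' J) := by
  have hC0 : 0 < C := Nat.pos_of_mul_pos_right ((Nat.zero_le _).trans_lt (hC 0))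
  obtain ⟨d, hd, hdJ⟩ := lowerDensity_pos_iff.1 hJ
  have hK : Tendsto (fun N : ℕ => (N + 1) / C - 1) atTop atTop :=
    (tendsto_sub_atTop_nat 1).comp
      ((Nat.tendsto_div_const_atTop hC0.ne').comp (tendsto_add_atTop_nat 1))
  refine lowerDensity_pos_iff.2 ⟨d / (2 * C), by positivity, ?_⟩
  filter_upwards [hK.eventually hdJ, eventually_ge_atTop C] with N hN hCN
  obtain ⟨K, hK⟩ : ∃ K, (N + 1) / C = K + 1 :=
    ⟨_, (Nat.succ_pred_eq_of_pos (Nat.div_pos (hCN.trans N.le_succ) hC0)).symm⟩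
  rw [hK, Nat.add_sub_cancel] at hN
  have hle : C * (K + 1) ≤ N + 1 := hK ▸ Nat.mul_div_le _ _
  have hlt : N + 1 < C * (K + 1 + 1) := hK ▸ Nat.lt_mul_div_succ _ hC0
  have himage : (truncation J K).image n ⊆ truncation (n '' J) N := by
    intro m hm
    obtain ⟨j, hj, rfl⟩ := Finset.mem_image.1 hm
    obtain ⟨hjK, hjJ⟩ := mem_truncation.1 hj
    have : C * (j + 1) ≤ C * (K + 1) := by gcongr
    exact mem_truncation.2 ⟨by linarith [hC j], Set.mem_image_of_mem n hjJ⟩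
  calc d / (2 * C) * (N + 1) ≤ d / (2 * C) * (2 * C * (K + 1)) := by
        gcongr
        exact_mod_cast (by nlinarith : N + 1 ≤ 2 * C * (K + 1))
    _ = d * (K + 1) := by field_simp
    _ ≤ (truncation J K).card := hN
    _ ≤ (truncation (n '' J) N).card := by
        rw [← Finset.card_image_of_injective _ hn]
        exact_mod_cast Finset.card_le_card himage

theorem freqHCVec.uFreqHCVec {X : Type*} [NormedAddCommGroup X] [NormedSpace ℝ X]
    {T : X →L[ℝ] X} {x : X} (hx : freqHCVec T x) : uFreqHCVec T x :=
  fun U hU hU' => (hx U hU hU').trans_le (lowerDensity_le_upperDensity _)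

end Density

section SeparatedSets

theorem sum_padicValNat_succ_le (q : ℕ) [Fact q.Prime] (j : ℕ) :
    ∑ i ∈ Finset.range j, padicValNat q (i + 1) ≤ j := by
  have hsum : ∑ i ∈ Finset.range j, padicValNat q (i + 1) = padicValNat q j.factorial := by
    induction j with
    | zero => simp
    | succ j ih =>
      rw [Finset.sum_range_succ, ih, Nat.factorial_succ,
        padicValNat.mul j.succ_ne_zero j.factorial_ne_zero, add_comm]
  have hq : 1 ≤ q - 1 := Nat.le_sub_one_of_lt (Fact.out : q.Prime).one_lt
  calc ∑ i ∈ Finset.range j, padicValNat q (i + 1) = padicValNat q j.factorial := hsum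
    _ ≤ (q - 1) * padicValNat q j.factorial := Nat.le_mul_of_pos_left _ hq
    _ = j - (q.digits j).sum := sub_one_mul_padicValNat_factorial j
    _ ≤ j := Nat.sub_le _ _

theorem lowerDensity_padicValNat_succ_eq_pos (q : ℕ) [Fact q.Prime] (v : ℕ) :
    0 < lowerDensity {j | padicValNat q (j + 1) = v} := by
  have hq : q.Prime := Fact.out
  have hpos (t : ℕ) : 0 < q ^ v * (q * t + 1) := Nat.mul_pos (pow_pos hq.pos v) (Nat.succ_pos _)
  have hinj : Function.Injective fun t : ℕ => q ^ v * (q * t + 1) - 1 := fun s t hst => by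
    have := Nat.sub_one_cancel (hpos s) (hpos t) hst
    simpa [hq.ne_zero] using this
  have hgrowth (t : ℕ) : q ^ v * (q * t + 1) - 1 < q ^ v * q * (t + 1) :=
    calc q ^ v * (q * t + 1) - 1 < q ^ v * (q * t + 1) := Nat.sub_one_lt (hpos t).ne'
      _ ≤ q ^ v * (q * t + q) := by gcongr; exact hq.one_le
      _ = q ^ v * q * (t + 1) := by ring
  refine lowerDensity_pos_mono ?_ (lowerDensity_image_pos hinj hgrowth lowerDensity_univ_pos)
  rintro _ ⟨t, -, rfl⟩
  have hval : padicValNat q (q * t + 1) = 0 := padicValNat.eq_zero_of_not_dvd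
    fun h => hq.one_lt.ne' (Nat.dvd_one.1 ((Nat.dvd_add_right (dvd_mul_right q t)).1 h))
  change padicValNat q (q ^ v * (q * t + 1) - 1 + 1) = v
  rw [Nat.sub_add_cancel (hpos t), padicValNat.mul (pow_pos hq.pos v).ne' (Nat.succ_ne_zero _),
    padicValNat.prime_pow, hval, add_zero]

theorem exists_surjective_forall_le_add (N : ℕ → ℕ) :
    ∃ h : ℕ → ℕ, Function.Surjective h ∧ ∀ v, N (h v) ≤ N 0 + v := by
  refine ⟨fun v => if N v.unpair.1 ≤ v then v.unpair.1 else 0, fun l => ⟨Nat.pair l (N l), ?_⟩,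
    fun v => ?_⟩
  · simp [Nat.right_le_pair]
  · dsimp only
    split_ifs with hv
    · exact hv.trans (Nat.le_add_left _ _)
    · exact Nat.le_add_right _ _

theorem exists_level_lowerDensity_pos_sum_le (N : ℕ → ℕ) :
    ∃ lev : ℕ → ℕ, (∀ l, 0 < lowerDensity {j | lev j = l}) ∧
      ∃ C, ∀ j, ∑ i ∈ Finset.range j, N (lev i) ≤ C * j := by
  obtain ⟨h, hsurj, hle⟩ := exists_surjective_forall_le_add N
  refine ⟨fun j => h (padicValNat 2 (j + 1)), fun l => ?_, N 0 + 1, fun j => ?_⟩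
  · obtain ⟨v, rfl⟩ := hsurj l
    exact lowerDensity_pos_mono (fun j hj => congrArg h hj)
      (lowerDensity_padicValNat_succ_eq_pos 2 v)
  · calc ∑ i ∈ Finset.range j, N (h (padicValNat 2 (i + 1)))
        ≤ ∑ i ∈ Finset.range j, (N 0 + padicValNat 2 (i + 1)) := Finset.sum_le_sum fun i _ => hle _
      _ = N 0 * j + ∑ i ∈ Finset.range j, padicValNat 2 (i + 1) := by
        rw [Finset.sum_add_distrib, Finset.sum_const, Finset.card_range, smul_eq_mul, mul_comm]
      _ ≤ (N 0 + 1) * j := by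
        rw [Nat.succ_mul]
        exact Nat.add_le_add_left (sum_padicValNat_succ_le 2 j) _

theorem exists_separated_lowerDensity_pos {N : ℕ → ℕ} (hN : ∀ l, 0 < N l) :
    ∃ A : ℕ → Set ℕ, (∀ l, 0 < lowerDensity (A l)) ∧ (∀ l, ∀ m ∈ A l, N l ≤ m) ∧
      ∀ k l, ∀ n ∈ A k, ∀ m ∈ A l, (k = l → n ≠ m) → (N k + N l : ℤ) ≤ |(n : ℤ) - m| := by
  obtain ⟨lev, hlev, C, hC⟩ := exists_level_lowerDensity_pos_sum_le N
  -- Disjoint consecutive intervals of radii `N (lev 0), N (lev 1), …` have centres `pos j`.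
  let pos (j : ℕ) : ℕ := 2 * ∑ i ∈ Finset.range j, N (lev i) + N (lev j)
  have hsep {i j : ℕ} (hij : i < j) : pos i + N (lev i) + N (lev j) ≤ pos j := by
    have : ∑ i ∈ Finset.range (i + 1), N (lev i) ≤ ∑ i ∈ Finset.range j, N (lev i) :=
      Finset.sum_le_sum_of_subset (Finset.range_subset_range.2 hij)
    rw [Finset.sum_range_succ] at this
    simp only [pos]
    omega
  have hmono : StrictMono pos := fun i j hij => by
    have := hsep hij
    have := hN (lev i)
    omega
  have hgrowth (j : ℕ) : pos j < (2 * C + 1) * (j + 1) := by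
    have := hC (j + 1)
    rw [Finset.sum_range_succ] at this
    simp only [pos]
    nlinarith
  refine ⟨fun l => pos '' {j | lev j = l},
    fun l => lowerDensity_image_pos hmono.injective hgrowth (hlev l), ?_, ?_⟩
  · rintro _ _ ⟨j, rfl, rfl⟩
    exact Nat.le_add_left _ _
  · rintro _ _ _ ⟨i, rfl, rfl⟩ _ ⟨j, rfl, rfl⟩ hne
    rw [le_abs]
    rcases lt_trichotomy i j with hij | rfl | hij
    · have := hsep hij
      omega
    · exact absurd rfl (hne rfl)
    · have := hsep hij
      omega

end SeparatedSets

section DelayedSum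

theorem exists_forall_mem_abs_le (s : Finset ℤ) : ∃ t : ℕ, ∀ k ∈ s, |k| ≤ t :=
  ⟨s.sup Int.natAbs, fun k hk => by
    rw [Int.abs_eq_natAbs]
    exact_mod_cast Finset.le_sup (f := Int.natAbs) hk⟩

variable {X : Type*} [NormedAddCommGroup X]

/-- The term of index `n` of the superposition of the copies of the sequence `z` delayed by the
elements of `A`. The criterion superposes orbits in this way. -/
noncomputable def delayedSum (z : ℤ → X) (A : Set ℕ) (n : ℤ) : X :=
  ∑' m : A, z (n - (m : ℕ))

theorem exists_norm_delayedSum_le {z : ℤ → X} (hz : Summable z) {ε : ℝ} (hε : 0 < ε) :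
    ∃ N : ℕ, ∀ (n : ℤ) (B : Set ℕ), (∀ m ∈ B, (N : ℤ) ≤ |n - m|) → ‖delayedSum z B n‖ ≤ ε := by
  obtain ⟨s, hs⟩ := hz.tsum_vanishing (Metric.closedBall_mem_nhds (0 : X) hε)
  obtain ⟨t, ht⟩ := exists_forall_mem_abs_le s
  refine ⟨t + 1, fun n B hB => ?_⟩
  have hdisj : Disjoint ((fun m : ℕ => n - m) '' B) ↑s := by
    rw [Set.disjoint_left]
    rintro _ ⟨m, hm, rfl⟩ hms
    exact (hB m hm).not_gt (by exact_mod_cast Int.lt_add_one_of_le (ht _ hms))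
  have hinj : Function.Injective fun m : ℕ => n - (m : ℤ) :=
    sub_right_injective.comp Nat.cast_injective
  rw [← mem_closedBall_zero_iff, delayedSum, ← tsum_image z hinj.injOn]
  exact hs _ hdisj

theorem exists_radii_norm_delayedSum_le {z : ℕ → ℤ → X} (hz : ∀ i, Summable (z i))
    {ε : ℕ → ℝ} (hε : ∀ j, 0 < ε j) :
    ∃ N : ℕ → ℕ, (∀ j, 0 < N j) ∧ ∀ i j, i ≤ j → ∀ (n : ℤ) (B : Set ℕ),
      (∀ m ∈ B, (N j : ℤ) ≤ |n - m|) → ‖delayedSum (z i) B n‖ ≤ ε j := by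
  choose N hN using fun i j => exists_norm_delayedSum_le (hz i) (hε j)
  refine ⟨fun j => (Finset.range (j + 1)).sup (N · j) + 1, fun j => Nat.succ_pos _,
    fun i j hij n B hB => hN i j n B fun m hm => le_trans ?_ (hB m hm)⟩
  exact_mod_cast (Finset.le_sup (f := (N · j)) (Finset.mem_range_succ_iff.2 hij)).trans
    (Nat.le_succ _)

variable [CompleteSpace X]

theorem summable_delayed {z : ℤ → X} (hz : Summable z) (A : Set ℕ) (n : ℤ) :
    Summable fun m : A => z (n - (m : ℕ)) :=
  hz.comp_injective (sub_right_injective.comp (Nat.cast_injective.comp Subtype.val_injective))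

theorem delayedSum_eq_add_sdiff_singleton {z : ℤ → X} (hz : Summable z) {A : Set ℕ} {n : ℕ}
    (hn : n ∈ A) : delayedSum z A n = z 0 + delayedSum z (A \ {n}) n := by
  have hunion := Summable.tsum_union_disjoint (f := fun m : ℕ => z (n - m))
    (Set.disjoint_sdiff_right (s := {n}) (t := A)) (summable_delayed hz _ n)
    (summable_delayed hz _ n)
  rw [Set.union_sdiff_cancel (Set.singleton_subset_iff.2 hn)] at hunion
  simpa [delayedSum] using hunion

theorem norm_delayedSum_sub_ite_le {z : ℕ → ℤ → X} (hz : ∀ i, Summable (z i))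
    {N : ℕ → ℕ} {ε : ℕ → ℝ}
    (hN : ∀ i j, i ≤ j → ∀ (n : ℤ) (B : Set ℕ),
      (∀ m ∈ B, (N j : ℤ) ≤ |n - m|) → ‖delayedSum (z i) B n‖ ≤ ε j)
    {A : ℕ → Set ℕ}
    (hA : ∀ k l, ∀ n ∈ A k, ∀ m ∈ A l, (k = l → n ≠ m) → (N k + N l : ℤ) ≤ |(n : ℤ) - m|)
    {l n : ℕ} (hn : n ∈ A l) (i : ℕ) :
    ‖delayedSum (z i) (A i) n - if i = l then z l 0 else 0‖ ≤ ε (i ⊔ l) := by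
  have hfar (B : Set ℕ) (hB : B ⊆ A i) (hne : i = l → n ∉ B) :
      ‖delayedSum (z i) B n‖ ≤ ε (i ⊔ l) := by
    refine hN i (i ⊔ l) le_sup_left n B fun m hm => ?_
    have := hA l i n hn m (hB hm) fun h hnm => hne h.symm (hnm ▸ hm)
    rcases max_choice i l with h | h <;> rw [h] <;> linarith
  split_ifs with h
  · subst h
    rw [delayedSum_eq_add_sdiff_singleton (hz i) hn, add_sub_cancel_left]
    exact hfar _ Set.sdiff_subset fun _ h => h.2 rfl
  · rw [sub_zero]
    exact hfar _ subset_rfl fun h' => absurd h' h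

end DelayedSum

section Criterion

variable {X : Type*} [NormedAddCommGroup X] [NormedSpace ℝ X]

/-- The vectors lying on a bilateral orbit of `T` whose terms are summable. Their density is the
hypothesis of the frequent hypercyclicity criterion. -/
def summableOrbits (T : X →L[ℝ] X) : AddSubmonoid X where
  carrier := {v | ∃ z : ℤ → X, z 0 = v ∧ (∀ k, T (z k) = z (k + 1)) ∧ Summable z}
  zero_mem' := ⟨0, rfl, fun _ => map_zero T, summable_zero⟩
  add_mem' := by
    rintro _ _ ⟨y, rfl, hTy, hy⟩ ⟨z, rfl, hTz, hz⟩
    exact ⟨y + z, rfl, fun k => by simp [hTy, hTz], hy.add hz⟩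

theorem pow_apply_orbit {T : X →L[ℝ] X} {z : ℤ → X} (hT : ∀ k, T (z k) = z (k + 1))
    (n : ℕ) (k : ℤ) : (T ^ n) (z k) = z (n + k) := by
  induction n with
  | zero => simp
  | succ n ih =>
    rw [pow_succ', mul_apply_eq_comp, ih, hT]
    push_cast
    ring_nf

variable [CompleteSpace X]

theorem pow_apply_delayedSum {T : X →L[ℝ] X} {z : ℤ → X} (hT : ∀ k, T (z k) = z (k + 1))
    (hz : Summable z) (A : Set ℕ) (n : ℕ) :
    (T ^ n) (delayedSum z A 0) = delayedSum z A n := by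
  rw [delayedSum, (T ^ n).map_tsum (summable_delayed hz A 0)]
  simp [delayedSum, pow_apply_orbit hT, sub_eq_add_neg]

theorem exists_forall_lowerDensity_norm_sub_le_pos {T : X →L[ℝ] X} {z : ℕ → ℤ → X}
    (hT : ∀ i k, T (z i k) = z i (k + 1)) (hz : ∀ i, Summable (z i)) :
    ∃ x, ∀ l, 0 < lowerDensity {n | ‖(T ^ n) x - z l 0‖ ≤ (1 / 2) ^ l * 2} := by
  obtain ⟨N, hN0, hN⟩ := exists_radii_norm_delayedSum_le hz
    (ε := fun j => (1 / 2) ^ j * (1 / 2) ^ j) fun j => by positivity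
  obtain ⟨A, hA, hNA, hsep⟩ := exists_separated_lowerDensity_pos hN0
  have hzero (i : ℕ) : ‖delayedSum (z i) (A i) 0‖ ≤ (1 / 2) ^ i := by
    refine (hN i i le_rfl 0 (A i) fun m hm => ?_).trans
      (mul_le_of_le_one_right (by positivity) (pow_le_one₀ (by norm_num) (by norm_num)))
    simpa using hNA i m hm
  have hreturn (l n : ℕ) (hn : n ∈ A l) (i : ℕ) :
      ‖delayedSum (z i) (A i) n - if i = l then z l 0 else 0‖ ≤ (1 / 2) ^ l * (1 / 2) ^ i := by
    refine (norm_delayedSum_sub_ite_le hz hN hsep hn i).trans ?_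
    gcongr ?_ * ?_ <;> apply pow_le_pow_of_le_one <;> norm_num
  have hsum : Summable fun i => delayedSum (z i) (A i) 0 :=
    summable_geometric_two.of_norm_bounded hzero
  refine ⟨∑' i, delayedSum (z i) (A i) 0, fun l => lowerDensity_pos_mono (fun n hn => ?_) (hA l)⟩
  have hpow : HasSum (fun i => delayedSum (z i) (A i) n)
      ((T ^ n) (∑' i, delayedSum (z i) (A i) 0)) := by
    simpa only [pow_apply_delayedSum (hT _) (hz _)] using (T ^ n).hasSum hsum.hasSum
  rw [Set.mem_ofPred_eq, ← (hpow.sub (hasSum_ite_eq l (z l 0))).tsum_eq]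
  exact tsum_of_norm_bounded (hasSum_geometric_two.mul_left _) (hreturn l n hn)

theorem exists_freqHCVec_of_dense_summableOrbits [TopologicalSpace.SeparableSpace X]
    {T : X →L[ℝ] X} (hT : Dense (summableOrbits T : Set X)) : ∃ x, freqHCVec T x := by
  have := UniformSpace.secondCountable_of_separable X
  let y (i : ℕ) : summableOrbits T := TopologicalSpace.denseSeq (summableOrbits T) i
  have hy : DenseRange fun i => (y i : X) := hT.denseRange_val.comp
    (TopologicalSpace.denseRange_denseSeq _) continuous_subtype_val
  choose z hzy hTz hz using fun i => (y i).2
  -- Through `Nat.unpair`, each of these orbits is approximated to arbitrary precision.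
  obtain ⟨x, hx⟩ := exists_forall_lowerDensity_norm_sub_le_pos
    (z := fun l => z l.unpair.1) (fun l => hTz l.unpair.1) fun l => hz l.unpair.1
  refine ⟨x, fun U hU hU' => ?_⟩
  obtain ⟨i, hi⟩ := hy.exists_mem_open hU hU'
  obtain ⟨r, hr, hrU⟩ := Metric.isOpen_iff.1 hU _ hi
  obtain ⟨j, hj⟩ := exists_pow_lt_of_lt_one (half_pos hr) (by norm_num : (1 / 2 : ℝ) < 1)
  refine lowerDensity_pos_mono (fun n hn => hrU ?_) (hx (Nat.pair i j))
  rw [Set.mem_ofPred_eq, Nat.unpair_pair, hzy] at hn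
  have hpow : ((1 / 2) ^ Nat.pair i j : ℝ) ≤ (1 / 2) ^ j :=
    pow_le_pow_of_le_one (by norm_num) (by norm_num) (Nat.right_le_pair i j)
  rw [mem_ball_iff_norm]
  linarith

end Criterion

section DifferenceCounting

open scoped Pointwise

variable {G : Type*} [AddCommGroup G] [DecidableEq G] {B K : Finset G}

theorem addEnergy_eq_sum_addConvolution_neg (B K : Finset G) :
    B.addEnergy K = ∑ k ∈ K, ∑ k' ∈ K, B.addConvolution (-B) (k' - k) := by
  simp_rw [Finset.addEnergy, Finset.card_filter, Finset.sum_product_right (s := B ×ˢ B),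
    Finset.sum_product (s := K), ← Finset.card_filter, ← Finset.card_sub_eq]
  refine Finset.sum_congr rfl fun k _ => Finset.sum_congr rfl fun k' _ => ?_
  congr! 2 with x
  rw [sub_eq_sub_iff_add_eq_add, add_comm k']

theorem addEnergy_le_of_addConvolution_neg_le {c : ℝ} (hc : 0 ≤ c)
    (h : ∀ k ∈ K, ∀ k' ∈ K, k ≠ k' → (B.addConvolution (-B) (k' - k) : ℝ) ≤ c) :
    (B.addEnergy K : ℝ) ≤ K.card * (B.card + K.card * c) := by
  have hterm (k) (hk : k ∈ K) (k') (hk' : k' ∈ K) :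
      (B.addConvolution (-B) (k' - k) : ℝ) ≤ (if k = k' then (B.card : ℝ) else 0) + c := by
    split_ifs with hkk'
    · have : (B.addConvolution (-B) (k' - k) : ℝ) ≤ B.card := by
        exact_mod_cast Finset.addConvolution_le_card_left
      linarith
    · rw [zero_add]
      exact h k hk k' hk' hkk'
  rw [addEnergy_eq_sum_addConvolution_neg, ← nsmul_eq_mul]
  push_cast
  refine Finset.sum_le_card_nsmul _ _ _ fun k hk => (Finset.sum_le_sum (hterm k hk)).trans_eq ?_
  rw [Finset.sum_add_distrib, Finset.sum_ite_eq, if_pos hk, Finset.sum_const, nsmul_eq_mul]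

theorem card_mul_sq_le_four_of_addConvolution_neg_le {d n : ℝ} (hd : 0 < d) (hn : 0 < n)
    (hdB : d * n ≤ B.card) (hB : (B.card : ℝ) ≤ n) (hBK : ((B + K).card : ℝ) ≤ 2 * n)
    (h : ∀ k ∈ K, ∀ k' ∈ K, k ≠ k' →
      (B.addConvolution (-B) (k' - k) : ℝ) ≤ d ^ 2 / 4 * n) :
    K.card * d ^ 2 ≤ 4 := by
  rcases (Nat.cast_nonneg (α := ℝ) K.card).eq_or_lt with hK | hK
  · rw [← hK, zero_mul]
    exact zero_le_four
  have hcs : (B.card : ℝ) ^ 2 * (K.card : ℝ) ^ 2 ≤ ((B + K).card : ℝ) * B.addEnergy K := by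
    exact_mod_cast Finset.le_card_add_mul_addEnergy B K
  have hle : (K.card * n ^ 2) * (K.card * d ^ 2) ≤
      (K.card * n ^ 2) * (2 * (1 + K.card * (d ^ 2 / 4))) :=
    calc (K.card * n ^ 2) * (K.card * d ^ 2) = (d * n) ^ 2 * (K.card : ℝ) ^ 2 := by ring
      _ ≤ (B.card : ℝ) ^ 2 * (K.card : ℝ) ^ 2 := by gcongr
      _ ≤ ((B + K).card : ℝ) * B.addEnergy K := hcs
      _ ≤ (2 * n) * (K.card * (B.card + K.card * (d ^ 2 / 4 * n))) := by
        gcongr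
        exact addEnergy_le_of_addConvolution_neg_le (by positivity) h
      _ ≤ (2 * n) * (K.card * (n + K.card * (d ^ 2 / 4 * n))) := by gcongr
      _ = (K.card * n ^ 2) * (2 * (1 + K.card * (d ^ 2 / 4))) := by ring
  linarith [le_of_mul_le_mul_left hle (by positivity)]

theorem sum_addConvolution_neg_mul_le {u : G → ℝ} (hu : ∀ k, 0 ≤ u k) (B F : Finset G) :
    ∑ k ∈ F, B.addConvolution (-B) k * u k ≤ ∑ b ∈ B, ∑ a ∈ B, u (a - b) := by
  calc ∑ k ∈ F, B.addConvolution (-B) k * u k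
      = ∑ k ∈ F, ∑ x ∈ B ×ˢ B with x.1 - x.2 = k, u (x.1 - x.2) := by
        refine Finset.sum_congr rfl fun k _ => ?_
        rw [Finset.sum_congr rfl fun x hx => congrArg u (Finset.mem_filter.1 hx).2,
          Finset.sum_const, nsmul_eq_mul, Finset.card_sub_eq]
    _ ≤ ∑ x ∈ B ×ˢ B, u (x.1 - x.2) :=
        Finset.sum_fiberwise_le_sum_of_sum_fiber_nonneg fun k _ => Finset.sum_nonneg fun x _ => hu _
    _ = ∑ b ∈ B, ∑ a ∈ B, u (a - b) := Finset.sum_product_right _ _ _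

theorem mul_sum_le_of_le_addConvolution_neg {u : G → ℝ} (hu : ∀ k, 0 ≤ u k) {c M : ℝ}
    {F : Finset G} (hF : ∀ k ∈ F, c ≤ B.addConvolution (-B) k)
    (hM : ∀ b ∈ B, ∑ a ∈ B, u (a - b) ≤ M) : c * ∑ k ∈ F, u k ≤ B.card * M :=
  calc c * ∑ k ∈ F, u k = ∑ k ∈ F, c * u k := Finset.mul_sum _ _ _
    _ ≤ ∑ k ∈ F, B.addConvolution (-B) k * u k :=
      Finset.sum_le_sum fun k hk => mul_le_mul_of_nonneg_right (hF k hk) (hu k)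
    _ ≤ ∑ b ∈ B, ∑ a ∈ B, u (a - b) := sum_addConvolution_neg_mul_le hu B F
    _ ≤ B.card * M := by
      rw [← nsmul_eq_mul]
      exact Finset.sum_le_card_nsmul _ _ _ hM

end DifferenceCounting

section BoundedGaps

theorem exists_bounded_gaps_of_card_le {D : Set ℤ} (h0 : 0 ∈ D) (hneg : ∀ k ∈ D, -k ∈ D) {c : ℕ}
    (hc : ∀ K : Finset ℤ, (∀ k ∈ K, ∀ k' ∈ K, k ≠ k' → k' - k ∉ D) → K.card ≤ c) :
    ∃ L : ℕ, ∀ k : ℤ, ∃ m : ℕ, m ≤ L ∧ k + m ∈ D := by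
  let P (K : Finset ℤ) : Prop := ∀ k ∈ K, ∀ k' ∈ K, k ≠ k' → k' - k ∉ D
  have hbdd : BddAbove (Finset.card '' {K | P K}) := ⟨c, by rintro _ ⟨K, hK, rfl⟩; exact hc K hK⟩
  have hne : (Finset.card '' {K | P K}).Nonempty := ⟨0, ∅, by simp [P], rfl⟩
  obtain ⟨K, hK, hKmax⟩ := Nat.sSup_mem hne hbdd
  obtain ⟨t, ht⟩ := exists_forall_mem_abs_le K
  have hmeet (x : ℤ) : ∃ i ∈ K, x - i ∈ D := by
    by_contra! hx
    have hxK : x ∉ K := fun h => hx x h (by rwa [sub_self])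
    have hinsert : P (insert x K) := by
      intro k hk k' hk' hkk'
      rcases Finset.mem_insert.1 hk with rfl | hkK
      · have hk'K := (Finset.mem_insert.1 hk').resolve_left hkk'.symm
        exact fun h => hx k' hk'K (neg_sub k' k ▸ hneg _ h)
      · rcases Finset.mem_insert.1 hk' with rfl | hk'K
        · exact hx k hkK
        · exact hK k hkK k' hk'K hkk'
    have := le_csSup hbdd ⟨_, hinsert, rfl⟩
    rw [← hKmax, Finset.card_insert_of_notMem hxK] at this
    omega
  refine ⟨2 * t, fun k => ?_⟩
  obtain ⟨i, hi, hiD⟩ := hmeet (k + t)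
  have := abs_le.1 (ht i hi)
  refine ⟨(t - i).toNat, by omega, ?_⟩
  rwa [Int.toNat_of_nonneg (by omega), ← add_sub_assoc]

theorem le_pow_mul_of_forall_le_mul_succ {u : ℤ → ℝ} {Q : ℝ} (hQ0 : 0 ≤ Q)
    (hQ : ∀ k, u k ≤ Q * u (k + 1)) (m : ℕ) (k : ℤ) : u k ≤ Q ^ m * u (k + m) := by
  induction m generalizing k with
  | zero => simp
  | succ m ih =>
    calc u k ≤ Q ^ m * u (k + m) := ih k
      _ ≤ Q ^ m * (Q * u (k + m + 1)) := by gcongr; exact hQ _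
      _ = Q ^ (m + 1) * u (k + (m + 1 : ℕ)) := by push_cast; ring_nf

theorem summable_of_summable_indicator_of_bounded_gaps {u : ℤ → ℝ} (hu : ∀ k, 0 ≤ u k) {Q : ℝ}
    (hQ : ∀ k, u k ≤ Q * u (k + 1)) {D : Set ℤ} {L : ℕ}
    (hL : ∀ k : ℤ, ∃ m : ℕ, m ≤ L ∧ k + m ∈ D) (hD : Summable (D.indicator u)) : Summable u := by
  have hQ' (k : ℤ) : u k ≤ |Q| * u (k + 1) :=
    (hQ k).trans (mul_le_mul_of_nonneg_right (le_abs_self Q) (hu _))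
  have hD0 (k : ℤ) : 0 ≤ D.indicator u k := Set.indicator_nonneg (fun k _ => hu k) k
  have hsum : Summable fun k : ℤ => ∑ m ∈ Finset.range (L + 1), |Q| ^ m * D.indicator u (k + m) :=
    summable_sum fun m _ => ((Equiv.addRight (m : ℤ)).summable_iff.2 hD).mul_left _
  refine hsum.of_nonneg_of_le hu fun k => ?_
  obtain ⟨m, hm, hmD⟩ := hL k
  calc u k ≤ |Q| ^ m * u (k + m) := le_pow_mul_of_forall_le_mul_succ (abs_nonneg Q) hQ' m k
    _ = |Q| ^ m * D.indicator u (k + m) := by rw [Set.indicator_of_mem hmD]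
    _ ≤ ∑ m ∈ Finset.range (L + 1), |Q| ^ m * D.indicator u (k + m) :=
      Finset.single_le_sum (f := fun m : ℕ => |Q| ^ m * D.indicator u (k + m))
        (fun m _ => mul_nonneg (by positivity) (hD0 _)) (Finset.mem_range_succ_iff.2 hm)

end BoundedGaps

section PopularDifferences

open scoped Pointwise

/-- The integers that, for `l`-almost every `N`, are differences of at least `η * (N + 1)` pairs of
elements of `B N`. -/
def popularDifferences (l : Filter ℕ) (B : ℕ → Finset ℤ) (η : ℝ) : Set ℤ :=
  {k | ∀ᶠ N in l, η * (N + 1) ≤ (B N).addConvolution (-B N) k}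

variable {B : ℕ → Finset ℤ} {l : Filter ℕ} {η : ℝ}

theorem neg_mem_popularDifferences {k : ℤ} (hk : k ∈ popularDifferences l B η) :
    -k ∈ popularDifferences l B η := by
  simpa [popularDifferences] using hk

theorem card_le_of_subset_Icc (hB : ∀ N : ℕ, B N ⊆ Finset.Icc 0 (N : ℤ)) (N : ℕ) :
    ((B N).card : ℝ) ≤ N + 1 := by
  have := Finset.card_le_card (hB N)
  rw [Int.card_Icc] at this
  exact_mod_cast (by omega : (B N).card ≤ N + 1)

theorem eventually_card_add_le (hB : ∀ N : ℕ, B N ⊆ Finset.Icc 0 (N : ℤ)) (K : Finset ℤ) :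
    ∀ᶠ N : ℕ in atTop, ((B N + K).card : ℝ) ≤ 2 * (N + 1) := by
  obtain ⟨t, ht⟩ := exists_forall_mem_abs_le K
  filter_upwards [eventually_ge_atTop (2 * t)] with N hN
  have hsub : B N + K ⊆ Finset.Icc (-t : ℤ) (N + t) := by
    refine Finset.add_subset_iff.2 fun b hb k hk => ?_
    have := Finset.mem_Icc.1 (hB N hb)
    have := abs_le.1 (ht k hk)
    exact Finset.mem_Icc.2 (by omega)
  have := Finset.card_le_card hsub
  rw [Int.card_Icc] at this
  exact_mod_cast (by omega : (B N + K).card ≤ 2 * (N + 1))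

theorem exists_bounded_gaps_popularDifferences {𝒰 : Ultrafilter ℕ} (h𝒰 : (𝒰 : Filter ℕ) ≤ atTop)
    (hB : ∀ N : ℕ, B N ⊆ Finset.Icc 0 (N : ℤ)) {d : ℝ} (hd : 0 < d)
    (hdB : ∀ᶠ N in 𝒰, d * (N + 1) ≤ (B N).card) :
    ∃ L : ℕ, ∀ k : ℤ, ∃ m : ℕ, m ≤ L ∧ k + m ∈ popularDifferences 𝒰 B (d ^ 2 / 4) := by
  have hd1 : d ≤ 1 := by
    obtain ⟨N, hN⟩ := hdB.exists
    exact (mul_le_iff_le_one_left (by positivity)).1 (hN.trans (card_le_of_subset_Icc hB N))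
  have h0 : 0 ∈ popularDifferences 𝒰 B (d ^ 2 / 4) := hdB.mono fun N hN => by
    have hzero : (B N).addConvolution (-B N) 0 = (B N).card := by
      rw [← Finset.card_inter_vadd, zero_vadd, Finset.inter_self]
    rw [hzero]
    refine le_trans ?_ hN
    gcongr
    nlinarith
  refine exists_bounded_gaps_of_card_le h0 (fun k => neg_mem_popularDifferences)
    (c := ⌊4 / d ^ 2⌋₊) fun K hK => Nat.le_floor ?_
  have hunpopular : ∀ᶠ N : ℕ in 𝒰, ∀ k ∈ K, ∀ k' ∈ K, k ≠ k' →
      ((B N).addConvolution (-B N) (k' - k) : ℝ) ≤ d ^ 2 / 4 * (N + 1) := by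
    simp only [eventually_all_finset, eventually_imp_distrib_left]
    exact fun k hk k' hk' hkk' => (Ultrafilter.eventually_not.2 (hK k hk k' hk' hkk')).mono
      fun N hN => (not_le.1 hN).le
  obtain ⟨N, ⟨hN, hdN⟩, hBK⟩ :=
    ((hunpopular.and hdB).and (h𝒰 (eventually_card_add_le hB K))).exists
  rw [le_div_iff₀ (by positivity)]
  exact card_mul_sq_le_four_of_addConvolution_neg_le hd (by positivity) hdN
    (card_le_of_subset_Icc hB N) hBK hN

theorem summable_indicator_popularDifferences [l.NeBot]
    (hB : ∀ N : ℕ, B N ⊆ Finset.Icc 0 (N : ℤ)) (hη : 0 < η) {u : ℤ → ℝ} (hu : ∀ k, 0 ≤ u k)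
    {M : ℝ} (hM : ∀ N, ∀ b ∈ B N, ∑ a ∈ B N, u (a - b) ≤ M) :
    Summable ((popularDifferences l B η).indicator u) := by
  refine summable_of_sum_le (c := |M| / η) (Set.indicator_nonneg fun k _ => hu k) fun F => ?_
  rw [Finset.sum_indicator_eq_sum_filter]
  obtain ⟨N, hN⟩ := ((eventually_all_finset (F.filter (· ∈ popularDifferences l B η))).2
    fun k hk => (Finset.mem_filter.1 hk).2).exists
  rw [le_div_iff₀' hη]
  refine le_of_mul_le_mul_right ?_ (by positivity : (0 : ℝ) < N + 1)
  calc (η * ∑ k ∈ F with k ∈ popularDifferences l B η, u k) * (N + 1)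
      = η * (N + 1) * ∑ k ∈ F with k ∈ popularDifferences l B η, u k := by ring
    _ ≤ (B N).card * M := mul_sum_le_of_le_addConvolution_neg hu hN (hM N)
    _ ≤ (B N).card * |M| := by gcongr; exact le_abs_self M
    _ ≤ (N + 1) * |M| := by gcongr; exact card_le_of_subset_Icc hB N
    _ = |M| * (N + 1) := mul_comm _ _

theorem summable_of_forall_sum_sub_le {A : Set ℕ} (hA : 0 < upperDensity A) {u : ℤ → ℝ}
    (hu : ∀ k, 0 ≤ u k) {Q : ℝ} (hQ : ∀ k, u k ≤ Q * u (k + 1)) {M : ℝ}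
    (hM : ∀ n ∈ A, ∀ B : Finset ℕ, ↑B ⊆ A → ∑ m ∈ B, u (m - n) ≤ M) : Summable u := by
  obtain ⟨d, hd, hdA⟩ := exists_frequently_le_card_truncation hA
  let dense : Set ℕ := {N | d * (N + 1) ≤ (truncation A N).card}
  have : NeBot (atTop ⊓ 𝓟 dense) := frequently_mem_iff_neBot.1 hdA
  let 𝒰 := Ultrafilter.of (atTop ⊓ 𝓟 dense)
  have h𝒰 : (𝒰 : Filter ℕ) ≤ atTop ⊓ 𝓟 dense := Ultrafilter.of_le _
  let B (N : ℕ) : Finset ℤ := (truncation A N).map Nat.castEmbedding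
  have hB (N : ℕ) : B N ⊆ Finset.Icc 0 (N : ℤ) := by
    intro k hk
    obtain ⟨m, hm, rfl⟩ := Finset.mem_map.1 hk
    simpa using (mem_truncation.1 hm).1
  have hdB : ∀ᶠ N in 𝒰, d * (N + 1) ≤ (B N).card := by
    simp only [B, Finset.card_map]
    exact h𝒰.trans inf_le_right (mem_principal_self dense)
  have hMB (N : ℕ) (b : ℤ) (hb : b ∈ B N) : ∑ a ∈ B N, u (a - b) ≤ M := by
    obtain ⟨n, hn, rfl⟩ := Finset.mem_map.1 hb
    rw [Finset.sum_map]
    exact hM n (mem_truncation.1 hn).2 _ fun m hm => (mem_truncation.1 hm).2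
  obtain ⟨L, hL⟩ := exists_bounded_gaps_popularDifferences (h𝒰.trans inf_le_left) hB hd hdB
  exact summable_of_summable_indicator_of_bounded_gaps hu hQ hL
    (summable_indicator_popularDifferences hB (by positivity) hu hMB)

end PopularDifferences

section Lp

variable {ι : Type*} {E : ι → Type*} [∀ i, NormedAddCommGroup (E i)] {p : ℝ≥0∞} [Fact (1 ≤ p)]

theorem dense_of_forall_single_mem [DecidableEq ι] (hp : p ≠ ⊤) {S : AddSubmonoid (lp E p)}
    (hS : ∀ i a, lp.single p i a ∈ S) : Dense (S : Set (lp E p)) := fun x =>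
  mem_closure_of_tendsto (lp.hasSum_single hp x) <| .of_forall fun _ =>
    S.sum_mem fun i _ => hS i (x i)

theorem separableSpace_lp [Countable ι] [∀ i, NormedSpace ℝ (E i)]
    [∀ i, TopologicalSpace.SeparableSpace (E i)] (hp : p ≠ ⊤) :
    TopologicalSpace.SeparableSpace (lp E p) := by
  let V : Submodule ℝ (lp E p) := Submodule.span ℝ (⋃ i, Set.range (lp.single p i))
  have hV : TopologicalSpace.IsSeparable (V : Set (lp E p)) :=
    (TopologicalSpace.IsSeparable.iUnion fun i => TopologicalSpace.isSeparable_range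
      (lp.isometry_single (E := E) (p := p) i).continuous).span
  have hdense : Dense (V.toAddSubmonoid : Set (lp E p)) := dense_of_forall_single_mem hp
    fun i a => Submodule.subset_span (Set.mem_iUnion.2 ⟨i, a, rfl⟩)
  exact TopologicalSpace.isSeparable_univ_iff.1 (hdense.closure_eq ▸ hV.closure)

end Lp

section WeightedShift

variable {ι 𝕜 E : Type*} [NormedField 𝕜] [NormedAddCommGroup E] [NormedSpace 𝕜 E]
  [NormedSpace ℝ E] {p : ℝ≥0∞} [hp : Fact (1 ≤ p)]

/-- `R` is the backward shift along the enumeration `e` of the index set, read in the coordinates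
`W i • x i`. Thus `W` is the cumulative product of the weights of the shift, and forward shifts are
covered by reversing `e`. -/
def IsWeightedShift (e : ℤ ≃ ι) (W : ι → 𝕜)
    (R : lp (fun _ : ι => E) p →L[ℝ] lp (fun _ : ι => E) p) : Prop :=
  ∀ x k, W (e k) • R x (e k) = W (e (k + 1)) • x (e (k + 1))

namespace IsWeightedShift

variable {e : ℤ ≃ ι} {W : ι → 𝕜} {R : lp (fun _ : ι => E) p →L[ℝ] lp (fun _ : ι => E) p}

theorem smul_pow_apply (hR : IsWeightedShift e W R) (x : lp (fun _ : ι => E) p) (n : ℕ) (k : ℤ) :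
    W (e k) • (R ^ n) x (e k) = W (e (k + n)) • x (e (k + n)) := by
  induction n generalizing k with
  | zero => simp
  | succ n ih =>
    rw [pow_succ', mul_apply_eq_comp, hR, ih]
    push_cast
    ring_nf

theorem norm_pow_apply (hR : IsWeightedShift e W R) (hW : ∀ i, W i ≠ 0)
    (x : lp (fun _ : ι => E) p) (n : ℕ) (k : ℤ) :
    ‖(R ^ n) x (e k)‖ = ‖W (e k)‖⁻¹ * (‖W (e (k + n))‖ * ‖x (e (k + n))‖) := by
  rw [eq_inv_mul_iff_mul_eq₀ (norm_ne_zero_iff.2 (hW _)), ← norm_smul, hR.smul_pow_apply, norm_smul]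

theorem map_single [DecidableEq ι] (hR : IsWeightedShift e W R) (hW : ∀ i, W i ≠ 0) (k : ℤ)
    (b : E) :
    R (lp.single p (e (k + 1)) ((W (e (k + 1)))⁻¹ • b)) = lp.single p (e k) ((W (e k))⁻¹ • b) := by
  ext i
  obtain ⟨j, rfl⟩ := e.surjective i
  apply smul_right_injective E (hW (e j))
  dsimp only
  rw [hR, lp.coeFn_single, lp.coeFn_single]
  rcases eq_or_ne j k with rfl | hjk
  · simp [smul_smul, hW]
  · simp [Pi.single_eq_of_ne, hjk]

theorem norm_inv_le [Nontrivial E] (hR : IsWeightedShift e W R) (hW : ∀ i, W i ≠ 0) (k : ℤ) :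
    ‖W (e k)‖⁻¹ ≤ ‖R‖ * ‖W (e (k + 1))‖⁻¹ := by
  obtain ⟨a, ha⟩ := exists_ne (0 : E)
  have hp0 : 0 < p := one_pos.trans_le hp.out
  have := R.le_opNorm (lp.single p (e (k + 1)) ((W (e (k + 1)))⁻¹ • a))
  rw [hR.map_single hW, lp.norm_single hp0, lp.norm_single hp0, norm_smul, norm_smul, norm_inv,
    norm_inv, ← mul_assoc] at this
  exact le_of_mul_le_mul_right this (norm_pos_iff.2 ha)

theorem single_mem_summableOrbits [DecidableEq ι] (hp' : p ≠ ⊤) (hR : IsWeightedShift e W R)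
    (hW : ∀ i, W i ≠ 0) (hsum : Summable fun i => ‖W i‖⁻¹ ^ p.toReal) (i : ι) (a : E) :
    lp.single p i a ∈ summableOrbits R := by
  obtain ⟨k, rfl⟩ := e.surjective i
  let b : E := W (e k) • a
  have hmem : Memℓp (fun i => (W i)⁻¹ • b) p := memℓp_gen <| by
    simpa only [norm_smul, norm_inv, Real.mul_rpow, norm_nonneg, inv_nonneg]
      using hsum.mul_right (‖b‖ ^ p.toReal)
  let y (i : ι) : lp (fun _ : ι => E) p := lp.single p i ((W i)⁻¹ • b)
  have hy : Summable y := (lp.hasSum_single hp' (⟨_, hmem⟩ : lp (fun _ : ι => E) p)).summable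
  refine ⟨fun j => y (e (k - j)), ?_, fun j => ?_,
    (((Equiv.subLeft k).trans e).summable_iff (f := y)).2 hy⟩
  · simp [y, b, smul_smul, hW]
  · simpa only [y, sub_add_eq_sub_sub, sub_add_cancel] using hR.map_single hW (k - j - 1) b

theorem exists_freqHCVec [CompleteSpace E] [TopologicalSpace.SeparableSpace E] (hp' : p ≠ ⊤)
    (hR : IsWeightedShift e W R) (hW : ∀ i, W i ≠ 0)
    (hsum : Summable fun i => ‖W i‖⁻¹ ^ p.toReal) : ∃ x, freqHCVec R x := by
  have : Countable ι := e.symm.injective.countable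
  have := separableSpace_lp (E := fun _ : ι => E) hp'
  exact exists_freqHCVec_of_dense_summableOrbits
    (dense_of_forall_single_mem hp' (hR.single_mem_summableOrbits hp' hW hsum))

theorem sum_norm_inv_rpow_le (hp' : p ≠ ⊤) (hR : IsWeightedShift e W R) (hW : ∀ i, W i ≠ 0)
    {x : lp (fun _ : ι => E) p} {δ : ℝ} (hδ : 0 < δ) {B : Finset ℕ}
    (hB : ∀ m ∈ B, δ ≤ ‖W (e m)‖ * ‖x (e m)‖) (n : ℕ) :
    ∑ m ∈ B, ‖W (e (m - n))‖⁻¹ ^ p.toReal ≤ (‖(R ^ n) x‖ / δ) ^ p.toReal := by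
  have hp0 : 0 < p.toReal := ENNReal.toReal_pos (one_pos.trans_le hp.out).ne' hp'
  have hinj : Function.Injective fun m : ℕ => e (m - n) :=
    e.injective.comp (sub_left_injective.comp Nat.cast_injective)
  have hterm (m : ℕ) (hm : m ∈ B) :
      ‖W (e (m - n))‖⁻¹ ^ p.toReal * δ ^ p.toReal ≤ ‖(R ^ n) x (e (m - n))‖ ^ p.toReal := by
    rw [← Real.mul_rpow (by positivity) hδ.le, hR.norm_pow_apply hW, sub_add_cancel]
    gcongr
    exact hB m hm
  rw [Real.div_rpow (norm_nonneg _) hδ.le, le_div_iff₀ (by positivity), Finset.sum_mul]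
  calc ∑ m ∈ B, ‖W (e (m - n))‖⁻¹ ^ p.toReal * δ ^ p.toReal
      ≤ ∑ m ∈ B, ‖(R ^ n) x (e (m - n))‖ ^ p.toReal := Finset.sum_le_sum hterm
    _ = ∑ i ∈ B.map ⟨_, hinj⟩, ‖(R ^ n) x i‖ ^ p.toReal :=
        (Finset.sum_map B ⟨_, hinj⟩ fun i => ‖(R ^ n) x i‖ ^ p.toReal).symm
    _ ≤ ‖(R ^ n) x‖ ^ p.toReal := lp.sum_rpow_le_norm_rpow hp0 _ _

theorem summable_of_uFreqHCVec [Nontrivial E] (hp' : p ≠ ⊤) (hR : IsWeightedShift e W R)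
    (hW : ∀ i, W i ≠ 0) {x : lp (fun _ : ι => E) p} (hx : uFreqHCVec R x) :
    Summable fun i => ‖W i‖⁻¹ ^ p.toReal := by
  obtain ⟨a, ha⟩ := exists_ne (0 : E)
  have ha0 : 0 < ‖a‖ / 2 := half_pos (norm_pos_iff.2 ha)
  have hW0 : 0 < ‖W (e 0)‖ := norm_pos_iff.2 (hW _)
  have hp0 : 0 < p := one_pos.trans_le hp.out
  let v : lp (fun _ : ι => E) p := lp.single p (e 0) a
  have hA := hx (Metric.ball v (‖a‖ / 2)) Metric.isOpen_ball ⟨v, Metric.mem_ball_self ha0⟩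
  have hcoord (n : ℕ) (hn : (R ^ n) x ∈ Metric.ball v (‖a‖ / 2)) :
      ‖W (e 0)‖ * (‖a‖ / 2) ≤ ‖W (e n)‖ * ‖x (e n)‖ := by
    have h0 : ‖(R ^ n) x (e 0) - a‖ < ‖a‖ / 2 := by
      simpa [v] using (lp.norm_apply_le_norm hp0.ne' ((R ^ n) x - v) (e 0)).trans_lt
        (mem_ball_iff_norm.1 hn)
    have h1 : ‖a‖ / 2 ≤ ‖(R ^ n) x (e 0)‖ := by
      have := norm_sub_norm_le a ((R ^ n) x (e 0))
      rw [norm_sub_rev] at this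
      linarith
    rwa [hR.norm_pow_apply hW, zero_add, le_inv_mul_iff₀ hW0] at h1
  have hnorm (n : ℕ) (hn : (R ^ n) x ∈ Metric.ball v (‖a‖ / 2)) : ‖(R ^ n) x‖ ≤ 2 * ‖a‖ := by
    have := norm_le_norm_add_norm_sub v ((R ^ n) x)
    rw [lp.norm_single hp0, norm_sub_rev] at this
    linarith [mem_ball_iff_norm.1 hn, norm_nonneg a]
  suffices Summable fun k => ‖W (e k)‖⁻¹ ^ p.toReal from e.summable_iff.1 this
  refine summable_of_forall_sum_sub_le hA (fun k => by positivity) (Q := ‖R‖ ^ p.toReal)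
    (M := (2 * ‖a‖ / (‖W (e 0)‖ * (‖a‖ / 2))) ^ p.toReal) (fun k => ?_) fun n hn B hB => ?_
  · rw [← Real.mul_rpow (norm_nonneg R) (by positivity)]
    exact Real.rpow_le_rpow (by positivity) (hR.norm_inv_le hW k) ENNReal.toReal_nonneg
  · refine (hR.sum_norm_inv_rpow_le hp' hW (mul_pos hW0 ha0)
      (fun m hm => hcoord m (hB hm)) n).trans ?_
    gcongr
    exact hnorm n hn

theorem exists_freqHCVec_iff [CompleteSpace E] [TopologicalSpace.SeparableSpace E] [Nontrivial E]
    (hp' : p ≠ ⊤) (hR : IsWeightedShift e W R) (hW : ∀ i, W i ≠ 0) :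
    (∃ x, freqHCVec R x) ↔ Summable fun i => ‖W i‖⁻¹ ^ p.toReal :=
  ⟨fun ⟨_, hx⟩ => hR.summable_of_uFreqHCVec hp' hW hx.uFreqHCVec, hR.exists_freqHCVec hp' hW⟩

end IsWeightedShift

end WeightedShift

section CumulativeWeight

variable {𝕜 : Type*} [NormedField 𝕜]

/-- The product `w 1 * ⋯ * w k` for `0 ≤ k`, and `(w (k + 1) * ⋯ * w 0)⁻¹` for `k ≤ 0`: the
weights whose quotients of consecutive terms are the entries of `w`. -/
noncomputable def cumulativeWeight (w : ℤ → 𝕜) (k : ℤ) : 𝕜 :=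
  (∏ i ∈ Finset.Ioc 0 k, w i) * (∏ i ∈ Finset.Ioc k 0, w i)⁻¹

variable {w : ℤ → 𝕜}

theorem cumulativeWeight_ne_zero (hw : ∀ n, w n ≠ 0) (k : ℤ) : cumulativeWeight w k ≠ 0 :=
  mul_ne_zero (Finset.prod_ne_zero_iff.2 fun i _ => hw i)
    (inv_ne_zero (Finset.prod_ne_zero_iff.2 fun i _ => hw i))

theorem cumulativeWeight_add_one (hw : ∀ n, w n ≠ 0) (k : ℤ) :
    cumulativeWeight w (k + 1) = w (k + 1) * cumulativeWeight w k := by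
  rcases le_or_gt 0 k with hk | hk
  · rw [cumulativeWeight, cumulativeWeight, ← Finset.insert_Ioc_right_eq_Ioc_add_one hk,
      Finset.prod_insert (by simp), Finset.Ioc_eq_empty_of_le (by omega : 0 ≤ k + 1),
      Finset.Ioc_eq_empty_of_le hk, mul_assoc]
  · rw [cumulativeWeight, cumulativeWeight, ← Finset.insert_Ioc_add_one_left_eq_Ioc hk,
      Finset.prod_insert (by simp), Finset.Ioc_eq_empty_of_le (by omega : k + 1 ≤ 0),
      Finset.Ioc_eq_empty_of_le hk.le, mul_inv, mul_left_comm, mul_inv_cancel_left₀ (hw _)]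

end CumulativeWeight

theorem stmt8_general {𝕜 E : Type*} [NormedField 𝕜] [NormedAddCommGroup E] [NormedSpace 𝕜 E]
    [NormedSpace ℝ E] [CompleteSpace E] [TopologicalSpace.SeparableSpace E] [Nontrivial E]
    {p : ℝ≥0∞} [Fact (1 ≤ p)] (hp' : p ≠ ⊤) {w : ℤ → 𝕜} (hw : ∀ n, w n ≠ 0)
    {T S : lp (fun _ : ℤ => E) p →L[ℝ] lp (fun _ : ℤ => E) p}
    (hT : ∀ x k, T x k = w (k + 1) • x (k + 1)) (hS : ∀ x k, S x k = (w k)⁻¹ • x (k - 1)) :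
    (∃ x, freqHCVec T x) ↔ (∃ x, freqHCVec S x) := by
  have hTW : IsWeightedShift (Equiv.refl ℤ) (cumulativeWeight w) T := fun x k => by
    rw [Equiv.refl_apply, Equiv.refl_apply, hT, cumulativeWeight_add_one hw, smul_smul, mul_comm]
  have hSW : IsWeightedShift (Equiv.neg ℤ) (cumulativeWeight w) S := fun x k => by
    have hwk := cumulativeWeight_add_one hw (-(k + 1))
    rw [neg_add, neg_add_cancel_right] at hwk
    rw [Equiv.neg_apply, hS, hwk, smul_smul, mul_right_comm,
      mul_inv_cancel₀ (hw _), one_mul, neg_add, sub_eq_add_neg]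
  have hW := cumulativeWeight_ne_zero hw
  exact (hTW.exists_freqHCVec_iff hp' hW).trans (hSW.exists_freqHCVec_iff hp' hW).symm

theorem stmt8 (p : ℝ≥0∞) [hp : Fact (1 ≤ p)] (hp' : p ≠ ⊤)
    (w : ℤ → ℝ) (hw : ∀ n, 0 < w n) (C c : ℝ) (hc : 0 < c)
    (hwc : ∀ n, c ≤ w n) (hC : ∀ n, w n ≤ C)
    (T S : lp (fun _ : ℤ => ℝ) p →L[ℝ] lp (fun _ : ℤ => ℝ) p)
    (hT : ∀ (x : lp (fun _ : ℤ => ℝ) p) (k : ℤ), (T x : ∀ _ : ℤ, ℝ) k = w (k+1) * (x : ∀ _ : ℤ, ℝ) (k+1))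
    (hS : ∀ (x : lp (fun _ : ℤ => ℝ) p) (k : ℤ), (S x : ∀ _ : ℤ, ℝ) k = (w k)⁻¹ * (x : ∀ _ : ℤ, ℝ) (k-1))
    (hTS : T.comp S = ContinuousLinearMap.id ℝ _)
    (hST : S.comp T = ContinuousLinearMap.id ℝ _) :
    (∃ x, freqHCVec T x) ↔ (∃ x, freqHCVec S x) :=
  stmt8_general hp' (fun n => (hw n).ne') hT hS
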